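/- Let a ≥ 0, c > 0 and let ψ : [a,∞) → ℝ be regulated. Then there exists a function ψ^c : [a,∞) → ℝ of locally bounded variation such that sup_{t ∈ [a,∞)} |ψ^c(t) − ψ(t)| ≤ c/2 and, for every t ≥ a, TV(ψ^c,[a,t]) = TV^c(ψ,[a,t]) < ∞, UTV(ψ^c,[a,t]) = UTV^c(ψ,[a,t]) and DTV(ψ^c,[a,t]) = DTV^c(ψ,[a,t]). -/

import Mathlib

open Filter Set Topology
open scoped ENNReal

/-- Sum of `f` over consecutive pairs of a finite sequence of points. -/
noncomputable def genVar (f : ℝ → ℝ → ℝ) (a b : ℝ) : ℝ≥0∞ :=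
  ⨆ (n : ℕ) (t : ℕ → ℝ)
    (_ : (∀ i, i < n → t i < t (i + 1)) ∧ a ≤ t 0 ∧ t n ≤ b),
    ENNReal.ofReal (∑ i ∈ Finset.range n, f (t i) (t (i + 1)))

noncomputable def TV (ψ : ℝ → ℝ) : ℝ → ℝ → ℝ≥0∞ :=
  genVar (fun s t => |ψ t - ψ s|)

noncomputable def UTV (ψ : ℝ → ℝ) : ℝ → ℝ → ℝ≥0∞ :=
  genVar (fun s t => max (ψ t - ψ s) 0)

noncomputable def DTV (ψ : ℝ → ℝ) : ℝ → ℝ → ℝ≥0∞ :=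
  genVar (fun s t => max (ψ s - ψ t) 0)

noncomputable def TVc (ψ : ℝ → ℝ) (c : ℝ) : ℝ → ℝ → ℝ≥0∞ :=
  genVar (fun s t => max (|ψ t - ψ s| - c) 0)

noncomputable def UTVc (ψ : ℝ → ℝ) (c : ℝ) : ℝ → ℝ → ℝ≥0∞ :=
  genVar (fun s t => max (ψ t - ψ s - c) 0)

noncomputable def DTVc (ψ : ℝ → ℝ) (c : ℝ) : ℝ → ℝ → ℝ≥0∞ :=
  genVar (fun s t => max (ψ s - ψ t - c) 0)

noncomputable def TVab (ψ α β : ℝ → ℝ) : ℝ → ℝ → ℝ≥0∞ :=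
  genVar (fun s t =>
    max (|(ψ t - (α t + β t) / 2) - (ψ s - (α s + β s) / 2)|
          - ((β t - α t) + (β s - α s)) / 2) 0)

noncomputable def UTVab (ψ α β : ℝ → ℝ) : ℝ → ℝ → ℝ≥0∞ :=
  genVar (fun s t =>
    max ((ψ t - (α t + β t) / 2) - (ψ s - (α s + β s) / 2)
          - ((β t - α t) + (β s - α s)) / 2) 0)

noncomputable def DTVab (ψ α β : ℝ → ℝ) : ℝ → ℝ → ℝ≥0∞ :=
  genVar (fun s t =>
    max ((ψ s - (α s + β s) / 2) - (ψ t - (α t + β t) / 2)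
          - ((β t - α t) + (β s - α s)) / 2) 0)

/-- Regulated on `[a,∞)`: right limits everywhere, left limits at points `> a`. -/
def Regulated (a : ℝ) (ψ : ℝ → ℝ) : Prop :=
  (∀ x, a ≤ x → ∃ L, Tendsto ψ (𝓝[>] x) (𝓝 L)) ∧
  (∀ x, a < x → ∃ L, Tendsto ψ (𝓝[<] x) (𝓝 L))

/-- Regulated on `[a,b]`. -/
def RegulatedOn (a b : ℝ) (ψ : ℝ → ℝ) : Prop :=
  (∀ x, a ≤ x → x < b → ∃ L, Tendsto ψ (𝓝[>] x) (𝓝 L)) ∧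
  (∀ x, a < x → x ≤ b → ∃ L, Tendsto ψ (𝓝[<] x) (𝓝 L))

/-!
Write `T t` for the truncated variation of `ψ` on `[a, t]`. It satisfies
`|ψ t - ψ s| ≤ c + |T t - T s|`, so `ψ` is Lipschitz up to an error `c` for the pseudo-distance
`|T t - T s|`, and McShane's infimum formula yields `φ` within `c / 2` of `ψ` with
`|φ t - φ s| ≤ |T t - T s|`. Hence `TV φ ≤ T`, while each variation of a function within `c / 2` of
`ψ` is at least the corresponding truncated variation of `ψ`. The positive and negative variations
are then squeezed between the two ends of
`T ≤ UTVc ψ + DTVc ψ ≤ UTV φ + DTV φ ≤ TV φ = T`.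
-/

/-- A finite sequence `a ≤ t 0 < t 1 < ⋯ < t n ≤ b`: the index set of the supremum in `genVar`.
The values of `t` beyond `n` are irrelevant. -/
def IsPartition (a b : ℝ) (n : ℕ) (t : ℕ → ℝ) : Prop :=
  (∀ i, i < n → t i < t (i + 1)) ∧ a ≤ t 0 ∧ t n ≤ b

namespace IsPartition

variable {a b r : ℝ} {n : ℕ} {t : ℕ → ℝ}

theorem strictMonoOn (ht : IsPartition a b n t) : StrictMonoOn t (Iic n) :=
  strictMonoOn_Iic_of_lt_succ ht.1

theorem mem_Icc (ht : IsPartition a b n t) {i : ℕ} (hi : i ≤ n) : t i ∈ Icc a b :=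
  ⟨ht.2.1.trans (ht.strictMonoOn.monotoneOn (Nat.zero_le n) hi (Nat.zero_le i)),
    (ht.strictMonoOn.monotoneOn hi self_mem_Iic hi).trans ht.2.2⟩

theorem mono_right {b' : ℝ} (ht : IsPartition a b n t) (hb : b ≤ b') : IsPartition a b' n t :=
  ⟨ht.1, ht.2.1, ht.2.2.trans hb⟩

theorem snoc (ht : IsPartition a b n t) (hr : t n < r) :
    IsPartition a r (n + 1) (Function.update t (n + 1) r) := by
  refine ⟨fun i hi => ?_, by simpa using ht.2.1, by simp⟩
  rcases (Nat.lt_succ_iff.1 hi).eq_or_lt with rfl | hin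
  · simpa using hr
  · simpa [Function.update_of_ne, hi.ne, hin.ne] using ht.1 i hin

end IsPartition

theorem sum_range_succ_update {α M : Type*} [AddCommMonoid M] (f : α → α → M) (t : ℕ → α)
    (n : ℕ) (r : α) :
    ∑ i ∈ Finset.range (n + 1),
        f (Function.update t (n + 1) r i) (Function.update t (n + 1) r (i + 1)) =
      ∑ i ∈ Finset.range n, f (t i) (t (i + 1)) + f (t n) r := by
  rw [Finset.sum_range_succ, Function.update_self, Function.update_of_ne (Nat.lt_succ_self n).ne]
  congr 1
  refine Finset.sum_congr rfl fun i hi => ?_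
  have hin : i < n := Finset.mem_range.1 hi
  rw [Function.update_of_ne (by lia), Function.update_of_ne (by lia)]

section GenVar

variable {f g h : ℝ → ℝ → ℝ} {a b s r : ℝ}

theorem genVar_le {B : ℝ≥0∞}
    (hB : ∀ n t, IsPartition a b n t →
      ENNReal.ofReal (∑ i ∈ Finset.range n, f (t i) (t (i + 1))) ≤ B) :
    genVar f a b ≤ B :=
  iSup_le fun n => iSup_le fun t => iSup_le (hB n t)

theorem le_genVar {n : ℕ} {t : ℕ → ℝ} (ht : IsPartition a b n t) :
    ENNReal.ofReal (∑ i ∈ Finset.range n, f (t i) (t (i + 1))) ≤ genVar f a b :=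
  le_iSup_of_le n (le_iSup_of_le t (le_iSup_of_le ht le_rfl))

theorem genVar_mono (hfg : ∀ x ∈ Icc a b, ∀ y ∈ Icc a b, f x y ≤ g x y) :
    genVar f a b ≤ genVar g a b := by
  refine genVar_le fun n t ht => (ENNReal.ofReal_le_ofReal ?_).trans (le_genVar ht)
  refine Finset.sum_le_sum fun i hi => ?_
  have hin : i < n := Finset.mem_range.1 hi
  exact hfg _ (ht.mem_Icc hin.le) _ (ht.mem_Icc hin)

theorem genVar_mono_right {b' : ℝ} (hb : b ≤ b') : genVar f a b ≤ genVar f a b' :=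
  genVar_le fun _ _ ht => le_genVar (ht.mono_right hb)

theorem genVar_le_add (hfgh : ∀ x y, f x y ≤ g x y + h x y) :
    genVar f a b ≤ genVar g a b + genVar h a b := by
  refine genVar_le fun n t ht => ?_
  refine le_trans ?_ (add_le_add (le_genVar ht) (le_genVar ht))
  refine le_trans (ENNReal.ofReal_le_ofReal ?_) ENNReal.ofReal_add_le
  rw [← Finset.sum_add_distrib]
  exact Finset.sum_le_sum fun i _ => hfgh _ _

theorem genVar_le_ofReal_sub (hf : ∀ x y, 0 ≤ f x y) {W : ℝ → ℝ}
    (hW : ∀ x y, a ≤ x → x < y → y ≤ b → f x y ≤ W y - W x) :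
    genVar f a b ≤ ENNReal.ofReal (W b - W a) := by
  have hmono : MonotoneOn W (Icc a b) := monotoneOn_iff_forall_lt.2 fun x hx y hy hxy =>
    sub_nonneg.1 ((hf x y).trans (hW x y hx.1 hxy hy.2))
  refine genVar_le fun n t ht => ENNReal.ofReal_le_ofReal ?_
  have h0 : t 0 ∈ Icc a b := ht.mem_Icc (Nat.zero_le n)
  have hn : t n ∈ Icc a b := ht.mem_Icc le_rfl
  have hab : a ≤ b := h0.1.trans h0.2
  calc ∑ i ∈ Finset.range n, f (t i) (t (i + 1))
      ≤ ∑ i ∈ Finset.range n, (W (t (i + 1)) - W (t i)) := by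
        refine Finset.sum_le_sum fun i hi => ?_
        have hin : i < n := Finset.mem_range.1 hi
        exact hW _ _ (ht.mem_Icc hin.le).1 (ht.1 i hin) (ht.mem_Icc hin).2
    _ = W (t n) - W (t 0) := Finset.sum_range_sub (fun i => W (t i)) n
    _ ≤ W b - W a :=
        sub_le_sub (hmono hn (right_mem_Icc.2 hab) hn.2) (hmono (left_mem_Icc.2 hab) h0 h0.1)

theorem exists_isPartition_last_eq (hf : ∀ x y, 0 ≤ f x y) {n : ℕ} {t : ℕ → ℝ}
    (ht : IsPartition a s n t) :
    ∃ m u, IsPartition a s m u ∧ u m = s ∧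
      ∑ i ∈ Finset.range n, f (t i) (t (i + 1)) ≤ ∑ i ∈ Finset.range m, f (u i) (u (i + 1)) := by
  rcases ht.2.2.eq_or_lt with hlast | hlast
  · exact ⟨n, t, ht, hlast, le_rfl⟩
  · refine ⟨n + 1, _, ht.snoc hlast, Function.update_self .., ?_⟩
    rw [sum_range_succ_update]
    exact le_add_of_nonneg_right (hf _ _)

theorem genVar_add_ofReal_le (hf : ∀ x y, 0 ≤ f x y) (has : a ≤ s) (hsr : s < r) :
    genVar f a s + ENNReal.ofReal (f s r) ≤ genVar f a r := by
  have hpart : ∀ n t, IsPartition a s n t →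
      ENNReal.ofReal (∑ i ∈ Finset.range n, f (t i) (t (i + 1))) + ENNReal.ofReal (f s r) ≤
        genVar f a r := by
    intro n t ht
    obtain ⟨m, u, hu, rfl, hle⟩ := exists_isPartition_last_eq hf ht
    refine (add_le_add_left (ENNReal.ofReal_le_ofReal hle) _).trans ?_
    rw [← ENNReal.ofReal_add (Finset.sum_nonneg fun i _ => hf _ _) (hf _ _),
      ← sum_range_succ_update]
    exact le_genVar (hu.snoc hsr)
  have hsingle : ENNReal.ofReal (f s r) ≤ genVar f a r := by
    simpa using hpart 0 (fun _ => s) ⟨by simp, has, le_rfl⟩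
  exact add_le_of_le_tsub_right_of_le hsingle
    (genVar_le fun n t ht => ENNReal.le_sub_of_add_le_right ENNReal.ofReal_ne_top (hpart n t ht))

theorem le_toReal_genVar_sub (hf : ∀ x y, 0 ≤ f x y) (has : a ≤ s) (hsr : s < r)
    (hr : genVar f a r < ⊤) :
    f s r ≤ (genVar f a r).toReal - (genVar f a s).toReal := by
  have hadd := genVar_add_ofReal_le hf has hsr
  have hs : genVar f a s ≠ ⊤ := (le_self_add.trans_lt (hadd.trans_lt hr)).ne
  have hreal := ENNReal.toReal_mono hr.ne hadd
  rw [ENNReal.toReal_add hs ENNReal.ofReal_ne_top, ENNReal.toReal_ofReal (hf _ _)] at hreal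
  linarith

theorem genVar_lt_top_iff (hf : ∀ x y, 0 ≤ f x y) :
    genVar f a b < ⊤ ↔
      ∃ W : ℝ → ℝ, ∀ x y, a ≤ x → x < y → y ≤ b → f x y ≤ W y - W x := by
  refine ⟨fun hfin => ⟨fun t => (genVar f a t).toReal, fun x y hax hxy hyb => ?_⟩, ?_⟩
  · exact le_toReal_genVar_sub hf hax hxy ((genVar_mono_right hyb).trans_lt hfin)
  · rintro ⟨W, hW⟩
    exact (genVar_le_ofReal_sub hf hW).trans_lt ENNReal.ofReal_lt_top

theorem genVar_lt_top_trans (hf : ∀ x y, 0 ≤ f x y) {C : ℝ} (hC : 0 ≤ C)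
    (htri : ∀ x y z, f x z ≤ f x y + f y z + C) {d : ℝ}
    (hab : genVar f a b < ⊤) (hbd : genVar f b d < ⊤) : genVar f a d < ⊤ := by
  rw [genVar_lt_top_iff hf] at hab hbd ⊢
  obtain ⟨W₁, hW₁⟩ := hab
  obtain ⟨W₂, hW₂⟩ := hbd
  refine ⟨fun z => if z ≤ b then W₁ z else W₁ b + C + (W₂ z - W₂ b), fun x z hax hxz hzd => ?_⟩
  dsimp only
  rcases le_or_gt z b with hzb | hbz
  · rw [if_pos hzb, if_pos (hxz.le.trans hzb)]
    exact hW₁ x z hax hxz hzb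
  rw [if_neg hbz.not_ge]
  rcases lt_trichotomy x b with hxb | rfl | hbx
  · rw [if_pos hxb.le]
    linarith [htri x b z, hW₁ x b hax hxb le_rfl, hW₂ b z le_rfl hbz hzd]
  · rw [if_pos le_rfl]
    linarith [hW₂ x z le_rfl hxz hzd]
  · rw [if_neg hbx.not_ge]
    linarith [hW₂ x z hbx.le hxz hzd]

end GenVar

section Variation

variable {φ ψ : ℝ → ℝ} {a b c : ℝ}

theorem UTV_le_ofReal_sub {T : ℝ → ℝ}
    (hT : ∀ x y, a ≤ x → x < y → y ≤ b → |φ y - φ x| ≤ T y - T x) :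
    UTV φ a b ≤ ENNReal.ofReal ((T b + φ b) / 2 - (T a + φ a) / 2) :=
  genVar_le_ofReal_sub (W := fun t => (T t + φ t) / 2) (fun _ _ => le_max_right _ _)
    fun x y hax hxy hyb => by
      have := abs_le.1 (hT x y hax hxy hyb)
      exact max_le (by linarith) (by linarith)

theorem DTV_le_ofReal_sub {T : ℝ → ℝ}
    (hT : ∀ x y, a ≤ x → x < y → y ≤ b → |φ y - φ x| ≤ T y - T x) :
    DTV φ a b ≤ ENNReal.ofReal ((T b - φ b) / 2 - (T a - φ a) / 2) :=
  genVar_le_ofReal_sub (W := fun t => (T t - φ t) / 2) (fun _ _ => le_max_right _ _)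
    fun x y hax hxy hyb => by
      have := abs_le.1 (hT x y hax hxy hyb)
      exact max_le (by linarith) (by linarith)

theorem UTV_add_DTV_le_TV (hab : a ≤ b) : UTV φ a b + DTV φ a b ≤ TV φ a b := by
  rcases eq_top_or_lt_top (TV φ a b) with htop | hfin
  · exact htop ▸ le_top
  let T : ℝ → ℝ := fun t => (TV φ a t).toReal
  have hT : ∀ x y, a ≤ x → x < y → y ≤ b → |φ y - φ x| ≤ T y - T x := fun x y hax hxy hyb =>
    le_toReal_genVar_sub (f := fun s t => |φ t - φ s|) (fun _ _ => abs_nonneg _) hax hxy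
      ((genVar_mono_right hyb).trans_lt hfin)
  have hTab : |φ b - φ a| ≤ T b - T a := by
    rcases hab.eq_or_lt with rfl | hlt
    · simp
    · exact hT a b le_rfl hlt le_rfl
  obtain ⟨hlow, hupp⟩ := abs_le.1 hTab
  calc UTV φ a b + DTV φ a b
      ≤ ENNReal.ofReal ((T b + φ b) / 2 - (T a + φ a) / 2) +
          ENNReal.ofReal ((T b - φ b) / 2 - (T a - φ a) / 2) :=
        add_le_add (UTV_le_ofReal_sub hT) (DTV_le_ofReal_sub hT)
    _ = ENNReal.ofReal (T b - T a) := by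
        rw [← ENNReal.ofReal_add (by linarith) (by linarith)]
        congr 1
        ring
    _ ≤ ENNReal.ofReal (T b) :=
        ENNReal.ofReal_le_ofReal (sub_le_self _ ENNReal.toReal_nonneg)
    _ = TV φ a b := ENNReal.ofReal_toReal hfin.ne

theorem TVc_le_UTVc_add_DTVc (ψ : ℝ → ℝ) (c a b : ℝ) :
    TVc ψ c a b ≤ UTVc ψ c a b + DTVc ψ c a b := by
  refine genVar_le_add fun x y => max_le ?_ (by positivity)
  rcases abs_cases (ψ y - ψ x) with ⟨habs, -⟩ | ⟨habs, -⟩ <;> rw [habs]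
  · exact le_add_of_le_of_nonneg (le_max_left _ _) (le_max_right _ _)
  · rw [neg_sub]
    exact le_add_of_nonneg_of_le (le_max_right _ _) (le_max_left _ _)

theorem sub_sub_le_sub_of_abs_sub_le {x y u v : ℝ} (hx : |u - x| ≤ c / 2) (hy : |v - y| ≤ c / 2) :
    y - x - c ≤ v - u := by
  linarith [(abs_le.1 hx).2, (abs_le.1 hy).1]

theorem UTVc_le_UTV (h : ∀ t ∈ Icc a b, |φ t - ψ t| ≤ c / 2) : UTVc ψ c a b ≤ UTV φ a b :=
  genVar_mono fun x hx y hy =>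
    max_le_max_right 0 (sub_sub_le_sub_of_abs_sub_le (h x hx) (h y hy))

theorem DTVc_le_DTV (h : ∀ t ∈ Icc a b, |φ t - ψ t| ≤ c / 2) : DTVc ψ c a b ≤ DTV φ a b :=
  genVar_mono fun x hx y hy =>
    max_le_max_right 0 (sub_sub_le_sub_of_abs_sub_le (h y hy) (h x hx))

theorem TVc_le_TV (h : ∀ t ∈ Icc a b, |φ t - ψ t| ≤ c / 2) : TVc ψ c a b ≤ TV φ a b := by
  refine genVar_mono fun x hx y hy => max_le (sub_le_iff_le_add.2 (abs_le'.2 ⟨?_, ?_⟩))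
    (abs_nonneg _)
  · linarith [sub_sub_le_sub_of_abs_sub_le (h x hx) (h y hy), le_abs_self (φ y - φ x)]
  · linarith [sub_sub_le_sub_of_abs_sub_le (h y hy) (h x hx), neg_abs_le (φ y - φ x)]

theorem abs_sub_le_add_abs_toReal_TVc_sub (hc : 0 ≤ c) (hfin : ∀ t, a ≤ t → TVc ψ c a t < ⊤)
    {s t : ℝ} (hs : a ≤ s) (ht : a ≤ t) :
    |ψ t - ψ s| ≤ c + |(TVc ψ c a t).toReal - (TVc ψ c a s).toReal| := by
  wlog hst : s ≤ t generalizing s t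
  · rw [abs_sub_comm (ψ t), abs_sub_comm (ENNReal.toReal _)]
    exact this ht hs (not_le.1 hst).le
  rcases hst.eq_or_lt with rfl | hlt
  · simpa using hc
  · have hinc : max (|ψ t - ψ s| - c) 0 ≤ (TVc ψ c a t).toReal - (TVc ψ c a s).toReal :=
      le_toReal_genVar_sub (f := fun s t => max (|ψ t - ψ s| - c) 0)
        (fun _ _ => le_max_right _ _) hs hlt (hfin t ht)
    linarith [le_abs_self ((TVc ψ c a t).toReal - (TVc ψ c a s).toReal),
      le_max_left (|ψ t - ψ s| - c) 0]

end Variation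

theorem exists_abs_sub_le_and_sub_le {α : Type*} {S : Set α} {ψ : α → ℝ} {d : α → α → ℝ} {c : ℝ}
    (hself : ∀ x, d x x = 0) (htri : ∀ x y z, d x z ≤ d x y + d y z)
    (hψ : ∀ x ∈ S, ∀ y ∈ S, ψ y - ψ x ≤ c + d x y) :
    ∃ φ : α → ℝ, (∀ x ∈ S, |φ x - ψ x| ≤ c / 2) ∧ ∀ x ∈ S, ∀ y ∈ S, φ y - φ x ≤ d x y := by
  let φ : α → ℝ := fun y => ⨅ x : S, (ψ x + c / 2 + d x y)
  have hlower : ∀ y ∈ S, ∀ x : S, ψ y - c / 2 ≤ ψ x + c / 2 + d x y := fun y hy x => by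
    linarith [hψ x x.2 y hy]
  have hφ_le : ∀ y ∈ S, ∀ x ∈ S, φ y ≤ ψ x + c / 2 + d x y := fun y hy x hx =>
    ciInf_le ⟨ψ y - c / 2, forall_mem_range.2 (hlower y hy)⟩ (⟨x, hx⟩ : S)
  refine ⟨φ, fun y hy => ?_, fun x hx y hy => ?_⟩
  · have : Nonempty S := ⟨⟨y, hy⟩⟩
    have hle := hφ_le y hy y hy
    have hge : ψ y - c / 2 ≤ φ y := le_ciInf (hlower y hy)
    rw [hself] at hle
    exact abs_le.2 ⟨by linarith, by linarith⟩
  · have : Nonempty S := ⟨⟨x, hx⟩⟩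
    have hge : φ y - d x y ≤ φ x := le_ciInf fun z => by
      linarith [hφ_le y hy z z.2, htri z x y]
    linarith

theorem exists_abs_sub_le_and_TV_le_TVc {a c : ℝ} (hc : 0 ≤ c) {ψ : ℝ → ℝ}
    (hfin : ∀ t, a ≤ t → TVc ψ c a t < ⊤) :
    ∃ φ : ℝ → ℝ, (∀ t, a ≤ t → |φ t - ψ t| ≤ c / 2) ∧
      ∀ t, a ≤ t → TV φ a t ≤ TVc ψ c a t := by
  let T : ℝ → ℝ := fun t => (TVc ψ c a t).toReal
  have hT : ∀ x y, x ≤ y → a ≤ y → T x ≤ T y := fun x y hxy hay =>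
    ENNReal.toReal_mono (hfin y hay).ne (genVar_mono_right hxy)
  obtain ⟨φ, hclose, hinc⟩ : ∃ φ : ℝ → ℝ, (∀ x ∈ Ici a, |φ x - ψ x| ≤ c / 2) ∧
      ∀ x ∈ Ici a, ∀ y ∈ Ici a, φ y - φ x ≤ |T y - T x| :=
    exists_abs_sub_le_and_sub_le (fun x => by simp)
      (fun x y z => (abs_sub_le (T z) (T y) (T x)).trans_eq (add_comm _ _))
      fun x hx y hy => (le_abs_self _).trans (abs_sub_le_add_abs_toReal_TVc_sub hc hfin hx hy)
  refine ⟨φ, hclose, fun t ht => ?_⟩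
  have hφ : ∀ x y, a ≤ x → x < y → y ≤ t → |φ y - φ x| ≤ T y - T x := by
    intro x y hax hxy _
    have hay : a ≤ y := hax.trans hxy.le
    rw [← abs_of_nonneg (sub_nonneg.2 (hT x y hxy.le hay))]
    refine abs_sub_le_iff.2 ⟨hinc x hax y hay, ?_⟩
    rw [abs_sub_comm]
    exact hinc y hay x hax
  calc TV φ a t ≤ ENNReal.ofReal (T t - T a) :=
        genVar_le_ofReal_sub (fun _ _ => abs_nonneg _) hφ
    _ ≤ ENNReal.ofReal (T t) := ENNReal.ofReal_le_ofReal (sub_le_self _ ENNReal.toReal_nonneg)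
    _ = TVc ψ c a t := ENNReal.ofReal_toReal (hfin t ht).ne

theorem eq_and_eq_of_add_le_add {x y x' y' : ℝ≥0∞} (hx : x ≤ x') (hy : y ≤ y')
    (hadd : x' + y' ≤ x + y) (hfin : x' + y' ≠ ⊤) : x' = x ∧ y' = y := by
  obtain ⟨hx', hy'⟩ := ENNReal.add_ne_top.1 hfin
  refine ⟨hx.antisymm' ?_, hy.antisymm' ?_⟩
  · exact ENNReal.le_of_add_le_add_right (ne_top_of_le_ne_top hy' hy)
      ((add_le_add_right hy x').trans hadd)
  · exact ENNReal.le_of_add_le_add_left (ne_top_of_le_ne_top hx' hx)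
      ((add_le_add_left hx y').trans hadd)

theorem stmt2_general (a c : ℝ) (hc : 0 ≤ c) (ψ : ℝ → ℝ)
    (hfin : ∀ t, a ≤ t → TVc ψ c a t < ⊤) :
    ∃ φ : ℝ → ℝ,
      (∀ t, a ≤ t → |φ t - ψ t| ≤ c / 2) ∧
      (∀ t, a ≤ t →
        TV φ a t = TVc ψ c a t ∧ UTV φ a t = UTVc ψ c a t ∧ DTV φ a t = DTVc ψ c a t) := by
  obtain ⟨φ, hclose, hTV⟩ := exists_abs_sub_le_and_TV_le_TVc hc hfin
  refine ⟨φ, hclose, fun t ht => ?_⟩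
  have hclose_Icc : ∀ x ∈ Icc a t, |φ x - ψ x| ≤ c / 2 := fun x hx => hclose x hx.1
  have hsum : UTV φ a t + DTV φ a t ≤ TVc ψ c a t := (UTV_add_DTV_le_TV ht).trans (hTV t ht)
  exact ⟨(hTV t ht).antisymm (TVc_le_TV hclose_Icc),
    eq_and_eq_of_add_le_add (UTVc_le_UTV hclose_Icc) (DTVc_le_DTV hclose_Icc)
      (hsum.trans (TVc_le_UTVc_add_DTVc ψ c a t)) (hsum.trans_lt (hfin t ht)).ne⟩

section Regulated

variable {ψ : ℝ → ℝ} {c : ℝ}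

theorem TVc_lt_top_of_abs_sub_le {s t L : ℝ} (h : ∀ x ∈ Ioo s t, |ψ x - L| ≤ c / 2) :
    TVc ψ c s t < ⊤ := by
  let K : ℝ → ℝ := fun x => max (|ψ x - L| - c / 2) 0
  have hK_Ioo : ∀ x ∈ Ioo s t, K x = 0 := fun x hx => max_eq_right (sub_nonpos.2 (h x hx))
  have hinc : ∀ x y, max (|ψ y - ψ x| - c) 0 ≤ K x + K y := fun x y => by
    have htri := abs_sub_le (ψ y) L (ψ x)
    rw [abs_sub_comm L] at htri
    refine max_le ?_ (add_nonneg (le_max_right _ _) (le_max_right _ _))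
    linarith [le_max_left (|ψ x - L| - c / 2) 0, le_max_left (|ψ y - L| - c / 2) 0]
  -- Only increments that start at `s` or end at `t` contribute.
  refine (genVar_lt_top_iff fun _ _ => le_max_right _ _).2
    ⟨fun z => (if s < z then K s else 0) + (if t ≤ z then K t else 0), fun x y hsx hxy hyt => ?_⟩
  have hxt : x < t := hxy.trans_le hyt
  have hsy : s < y := hsx.trans_lt hxy
  have hx : K x = K s - (if s < x then K s else 0) := by
    rcases hsx.eq_or_lt with rfl | hlt
    · simp
    · rw [hK_Ioo x ⟨hlt, hxt⟩, if_pos hlt, sub_self]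
  have hy : K y = if t ≤ y then K t else 0 := by
    rcases hyt.eq_or_lt with rfl | hlt
    · simp
    · rw [hK_Ioo y ⟨hsy, hlt⟩, if_neg hlt.not_ge]
  have hxy_le := hinc x y
  rw [hx, hy] at hxy_le
  simp only [if_pos hsy, if_neg hxt.not_ge]
  linarith

theorem TVc_lt_top_trans {x y z : ℝ} (hc : 0 ≤ c)
    (hxy : TVc ψ c x y < ⊤) (hyz : TVc ψ c y z < ⊤) : TVc ψ c x z < ⊤ := by
  refine genVar_lt_top_trans (fun _ _ => le_max_right _ _) hc (fun u v w => ?_) hxy hyz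
  refine max_le ?_ (by positivity)
  linarith [abs_sub_le (ψ w) (ψ v) (ψ u), le_max_left (|ψ v - ψ u| - c) 0,
    le_max_left (|ψ w - ψ v| - c) 0]

theorem eventually_nhdsGT_TVc_lt_top {x L : ℝ} (hc : 0 < c)
    (hL : Tendsto ψ (𝓝[>] x) (𝓝 L)) : ∀ᶠ y in 𝓝[>] x, TVc ψ c x y < ⊤ := by
  obtain ⟨u, hu, hclose⟩ := mem_nhdsGT_iff_exists_Ioo_subset.1
    (hL (Metric.closedBall_mem_nhds L (half_pos hc)))
  filter_upwards [Ioo_mem_nhdsGT hu] with y hy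
  exact TVc_lt_top_of_abs_sub_le fun z hz => hclose ⟨hz.1, hz.2.trans hy.2⟩

theorem eventually_nhdsLT_TVc_lt_top {x L : ℝ} (hc : 0 < c)
    (hL : Tendsto ψ (𝓝[<] x) (𝓝 L)) : ∀ᶠ y in 𝓝[<] x, TVc ψ c y x < ⊤ := by
  obtain ⟨u, hu, hclose⟩ := mem_nhdsLT_iff_exists_Ioo_subset.1
    (hL (Metric.closedBall_mem_nhds L (half_pos hc)))
  filter_upwards [Ioo_mem_nhdsLT hu] with y hy
  exact TVc_lt_top_of_abs_sub_le fun z hz => hclose ⟨hy.1.trans hz.1, hz.2⟩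

theorem TVc_lt_top_of_le {x y : ℝ} (hyx : y ≤ x) : TVc ψ c x y < ⊤ :=
  TVc_lt_top_of_abs_sub_le (L := 0) fun _ hz => absurd (hz.1.trans hz.2) hyx.not_gt

theorem Regulated.TVc_lt_top {a t : ℝ} (hψ : Regulated a ψ) (hc : 0 < c)
    (ht : a ≤ t) : TVc ψ c a t < ⊤ := by
  refine isPreconnected_Ici.induction₂' (fun x y => TVc ψ c x y < ⊤) (fun x hx => ?_)
    (fun _ _ _ _ _ _ => TVc_lt_top_trans hc.le) (self_mem_Ici (a := a)) ht
  have hright : ∀ᶠ y in 𝓝 x, x < y → TVc ψ c x y < ⊤ := by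
    obtain ⟨L, hL⟩ := hψ.1 x hx
    exact eventually_nhdsWithin_iff.1 (eventually_nhdsGT_TVc_lt_top hc hL)
  have hleft : ∀ᶠ y in 𝓝 x, a ≤ y → y < x → TVc ψ c y x < ⊤ := by
    rcases (mem_Ici.1 hx).eq_or_lt with rfl | hax
    · exact .of_forall fun y hay hya => absurd hya hay.not_gt
    · obtain ⟨L, hL⟩ := hψ.2 x hax
      filter_upwards [eventually_nhdsWithin_iff.1 (eventually_nhdsLT_TVc_lt_top hc hL)]
        with y hy _ using hy
  filter_upwards [eventually_nhdsWithin_of_eventually_nhds hright,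
    eventually_nhdsWithin_of_eventually_nhds hleft, self_mem_nhdsWithin] with y hyr hyl hay
  rcases lt_trichotomy x y with hxy | rfl | hyx
  · exact ⟨hyr hxy, TVc_lt_top_of_le hxy.le⟩
  · exact ⟨TVc_lt_top_of_le le_rfl, TVc_lt_top_of_le le_rfl⟩
  · exact ⟨TVc_lt_top_of_le hyx.le, hyl hay hyx⟩

end Regulated

/-- for a regulated `ψ : [a,∞) → ℝ` and `c > 0` there is a
function `ψᶜ` of locally bounded variation, uniformly `c/2`-close to `ψ`
on `[a,∞)`, whose total, positive and negative variations on every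
`[a,t]` equal the corresponding truncated variations of `ψ`. -/
theorem stmt2 (a c : ℝ) (ha : 0 ≤ a) (hc : 0 < c) (ψ : ℝ → ℝ)
    (hreg : Regulated a ψ) :
    ∃ φ : ℝ → ℝ,
      (∀ t, a ≤ t → |φ t - ψ t| ≤ c / 2) ∧
      (∀ t, a ≤ t →
        TV φ a t = TVc ψ c a t ∧ TVc ψ c a t < ⊤ ∧
        UTV φ a t = UTVc ψ c a t ∧
        DTV φ a t = DTVc ψ c a t) := by
  obtain ⟨φ, hclose, hvar⟩ := stmt2_general a c hc.le ψ fun t => hreg.TVc_lt_top hc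
  exact ⟨φ, hclose, fun t ht => ⟨(hvar t ht).1, hreg.TVc_lt_top hc ht, (hvar t ht).2⟩⟩
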